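/- arXiv:2205.07427 — 4 statements merged into one kernel-verified Lean document; each statement's English description precedes it below -/
import Mathlib

section
/- Let (Ω, μ) be a measure space and g : Ω → ℝ integrable with ∫_Ω g dμ = 0. Let Ω^r ⊆ Ω be measurable with μ(Ω^r) > 0 and g(x) < 0 for every x ∈ Ω^r. Fix ω > 1 and set w(x) = ω for x ∈ Ω^r and w(x) = 1 otherwise; suppose the weighted generalization error Err^w : ℝ → ℝ is differentiable, is unimodal with minimizer c'^* (strictly decreasing on (-∞, c'^*], strictly increasing on [c'^*, ∞)), and its derivative at c* equals ∫_Ω w(x)·g(x) dμ(x) (differentiation under the integral sign). Then c'^* > c*. (Paper's Proposition 3: placing a constant weight ω > 1 on a region of hard samples, each with LDC > 1, while keeping weight 1 elsewhere, makes the new optimal model complexity strictly larger.) -/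
open MeasureTheory

/-!
Putting extra weight where `g` is negative lowers the integral of `g`, so the weighted error has
negative derivative at the old optimum `cstar`. A function that increases on `[c', ∞)` cannot have a
negative derivative at any point of that ray, hence `cstar < c'`.
-/

section Integral

variable {α : Type*} [MeasurableSpace α] {μ : Measure α}

theorem integral_lt_integral_of_ae_le_of_frequently_ae_lt {f g : α → ℝ}
    (hf : Integrable f μ) (hg : Integrable g μ) (hle : f ≤ᵐ[μ] g) (hlt : ∃ᵐ x ∂μ, f x < g x) :
    ∫ x, f x ∂μ < ∫ x, g x ∂μ := by
  refine (integral_mono_ae hf hg hle).lt_of_ne fun heq ↦ hlt ?_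
  filter_upwards [(integral_eq_iff_of_ae_le hf hg hle).1 heq] with x hx using hx.not_lt

theorem integral_mul_lt_integral_of_neg_of_one_lt {g w : α → ℝ} {s : Set α}
    (hg : Integrable g μ) (hwg : Integrable (fun x ↦ w x * g x) μ) (hs : μ s ≠ 0)
    (hneg : ∀ x ∈ s, g x < 0) (hone_lt : ∀ x ∈ s, 1 < w x) (hle : ∀ x ∉ s, w x * g x ≤ g x) :
    ∫ x, w x * g x ∂μ < ∫ x, g x ∂μ := by
  have hlt : ∀ x ∈ s, w x * g x < g x := fun x hx ↦
    mul_lt_of_one_lt_left (hneg x hx) (hone_lt x hx)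
  refine integral_lt_integral_of_ae_le_of_frequently_ae_lt hwg hg (ae_of_all μ fun x ↦ ?_)
    ((frequently_ae_mem_iff.2 hs).mono hlt)
  by_cases hx : x ∈ s
  exacts [(hlt x hx).le, hle x hx]

theorem integrable_smul_of_eq_const_of_eq_const_compl {𝕜 E : Type*} [NormedAddCommGroup 𝕜]
    [NormedAddCommGroup E] [SMulZeroClass 𝕜 E] [IsBoundedSMul 𝕜 E] {f : α → E} {w : α → 𝕜}
    {s : Set α} {a b : 𝕜} (hf : Integrable f μ) (hs : MeasurableSet s)
    (ha : ∀ x ∈ s, w x = a) (hb : ∀ x ∉ s, w x = b) :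
    Integrable (fun x ↦ w x • f x) μ := by
  classical
  have hpiecewise : s.piecewise (a • f) (b • f) = fun x ↦ w x • f x := by
    ext x
    by_cases hx : x ∈ s
    · simp [hx, ha x hx]
    · simp [hx, hb x hx]
  exact hpiecewise ▸ Integrable.piecewise hs (hf.smul a).integrableOn (hf.smul b).integrableOn

end Integral

theorem lt_of_hasDerivAt_neg_of_monotoneOn_Ici {f : ℝ → ℝ} {f' a x : ℝ}
    (hf : HasDerivAt f f' x) (hf' : f' < 0) (hmono : MonotoneOn f (Set.Ici a)) : x < a := by
  by_contra! hax
  have hacc := uniqueDiffWithinAt_iff_accPt.1 (uniqueDiffOn_Ici a x hax)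
  exact hf'.not_ge (hf.hasDerivWithinAt.nonneg_of_monotoneOn hacc hmono)

theorem prop3_harder_weighting_increases_complexity_general
    {Ω : Type*} [MeasurableSpace Ω] {μ : Measure Ω} {g w : Ω → ℝ} {Ωr : Set Ω}
    (hg : Integrable g μ) (hwg : Integrable (fun x ↦ w x * g x) μ) (hg0 : ∫ x, g x ∂μ ≤ 0)
    (hΩr : μ Ωr ≠ 0) (hneg : ∀ x ∈ Ωr, g x < 0)
    (hwin : ∀ x ∈ Ωr, 1 < w x) (hwout : ∀ x ∉ Ωr, w x * g x ≤ g x)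
    {Errw : ℝ → ℝ} {cstar c' : ℝ} (hmono : MonotoneOn Errw (Set.Ici c'))
    (hderiv : HasDerivAt Errw (∫ x, w x * g x ∂μ) cstar) :
    cstar < c' :=
  have hlt : ∫ x, w x * g x ∂μ < 0 :=
    (integral_mul_lt_integral_of_neg_of_one_lt hg hwg hΩr hneg hwin hwout).trans_le hg0
  lt_of_hasDerivAt_neg_of_monotoneOn_Ici hderiv hlt hmono

/-- Paper's Proposition 3: placing a constant weight `ω > 1` on a region `Ωr` of hard
samples (per-sample derivative `g` negative there, i.e. LDC > 1), keeping weight `1`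
elsewhere, makes the new optimal model complexity `c'` strictly larger than `cstar`. -/
theorem prop3_harder_weighting_increases_complexity
    {Ω : Type*} [MeasurableSpace Ω] (μ : Measure Ω)
    (g : Ω → ℝ) (hg : Integrable g μ) (hg0 : ∫ x, g x ∂μ = 0)
    (Ωr : Set Ω) (hΩr : MeasurableSet Ωr) (hΩrpos : 0 < μ Ωr)
    (hneg : ∀ x ∈ Ωr, g x < 0)
    (ω : ℝ) (hω : 1 < ω)
    (w : Ω → ℝ) (hwin : ∀ x ∈ Ωr, w x = ω) (hwout : ∀ x ∉ Ωr, w x = 1)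
    (Errw : ℝ → ℝ) (cstar c' : ℝ)
    (hdiff : Differentiable ℝ Errw)
    (hanti : StrictAntiOn Errw (Set.Iic c'))
    (hmono : StrictMonoOn Errw (Set.Ici c'))
    (hderiv : deriv Errw cstar = ∫ x, w x * g x ∂μ) :
    c' > cstar := by
  have hwg := integrable_smul_of_eq_const_of_eq_const_compl hg hΩr hwin hwout
  exact prop3_harder_weighting_increases_complexity_general hg hwg hg0.le hΩrpos.ne' hneg
    (fun x hx ↦ hω.trans_eq (hwin x hx).symm) (fun x hx ↦ by rw [hwout x hx, one_mul])
    hmono.monotoneOn (hderiv ▸ (hdiff cstar).hasDerivAt)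
end

section
/- Let (Ω, μ) be a measure space, let g : Ω → ℝ, and let ω₀ : Ω → ℝ be a nonnegative measurable original weight with ω₀·g integrable and ∫_Ω ω₀(x)·g(x) dμ(x) = 0 (first-order optimality of c* for the originally weighted error). Let Ω^r ⊆ Ω be measurable with μ(Ω^r) > 0 and g(x) < 0 for every x ∈ Ω^r. Let ω̃ : Ω → ℝ be a nonnegative measurable weight with ω̃·g integrable, ω̃(x) > ω₀(x) for every x ∈ Ω^r, and ω̃(x) = ω₀(x) for x ∉ Ω^r. Suppose the new weighted generalization error Err^{ω̃} : ℝ → ℝ is differentiable, unimodal with minimizer c̃* (strictly decreasing on (-∞, c̃*], strictly increasing on [c̃*, ∞)), and its derivative at c* equals ∫_Ω ω̃(x)·g(x) dμ(x). Then c̃* > c*. (Paper's Corollary 1: increasing the weights on a region of samples with LDC > 1, keeping all other weights unchanged, makes the new optimal model complexity strictly larger.) -/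
/-!
Raising the weights where `g` is negative lowers the weighted integral of `g` strictly, so the new
error curve has a negative derivative at `cstar`. This is impossible at a point of `[ctilde, ∞)`,
where the curve is nondecreasing to the right.
-/

open MeasureTheory

section Integral

variable {Ω : Type*} [MeasurableSpace Ω] {μ : Measure Ω}

theorem integral_lt_integral_of_ae_le_of_frequently_lt {f₁ f₂ : Ω → ℝ}
    (hf₁ : Integrable f₁ μ) (hf₂ : Integrable f₂ μ) (hle : f₁ ≤ᵐ[μ] f₂)
    (hlt : ∃ᵐ x ∂μ, f₁ x < f₂ x) :
    ∫ x, f₁ x ∂μ < ∫ x, f₂ x ∂μ := by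
  refine (integral_mono_ae hf₁ hf₂ hle).lt_of_ne fun hint ↦ hlt ?_
  filter_upwards [(integral_eq_iff_of_ae_le hf₁ hf₂ hle).1 hint] with x hx using hx.not_lt

theorem integral_mul_lt_integral_mul_of_lt_of_neg {w₁ w₂ g : Ω → ℝ} {s : Set Ω}
    (hw₁g : Integrable (fun x ↦ w₁ x * g x) μ) (hw₂g : Integrable (fun x ↦ w₂ x * g x) μ)
    (hs : μ s ≠ 0) (hg : ∀ᵐ x ∂μ, x ∈ s → g x < 0) (hlt : ∀ᵐ x ∂μ, x ∈ s → w₁ x < w₂ x)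
    (heq : ∀ᵐ x ∂μ, x ∉ s → w₂ x = w₁ x) :
    ∫ x, w₂ x * g x ∂μ < ∫ x, w₁ x * g x ∂μ := by
  have hlt_on : ∀ᵐ x ∂μ, x ∈ s → w₂ x * g x < w₁ x * g x := by
    filter_upwards [hg, hlt] with x hgx hltx hx
    exact mul_lt_mul_of_neg_right (hltx hx) (hgx hx)
  have hle : ∀ᵐ x ∂μ, w₂ x * g x ≤ w₁ x * g x := by
    filter_upwards [hlt_on, heq] with x hltx heqx
    by_cases hx : x ∈ s
    · exact (hltx hx).le
    · rw [heqx hx]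
  exact integral_lt_integral_of_ae_le_of_frequently_lt hw₂g hw₁g hle
    ((frequently_ae_mem_iff.2 hs).mp hlt_on)

end Integral

theorem lt_of_monotoneOn_Ici_of_hasDerivWithinAt_neg {f : ℝ → ℝ} {f' a x : ℝ}
    (hf : MonotoneOn f (Set.Ici a)) (hf' : HasDerivWithinAt f f' (Set.Ici x) x)
    (hneg : f' < 0) : x < a := by
  by_contra! hax
  have hmono : MonotoneOn f (Set.Ici x) := hf.mono (Set.Ici_subset_Ici.2 hax)
  exact hneg.not_ge (hf'.nonneg_of_monotoneOn (uniqueDiffWithinAt_Ici x).accPt hmono)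

theorem cor1_increasing_hard_weights_general
    {Ω : Type*} [MeasurableSpace Ω] {μ : Measure Ω} {g ω₀ ωt : Ω → ℝ} {Ωr : Set Ω}
    (hω₀g : Integrable (fun x ↦ ω₀ x * g x) μ) (hopt : ∫ x, ω₀ x * g x ∂μ ≤ 0)
    (hΩr : μ Ωr ≠ 0) (hneg : ∀ᵐ x ∂μ, x ∈ Ωr → g x < 0)
    (hωtg : Integrable (fun x ↦ ωt x * g x) μ)
    (hgt : ∀ᵐ x ∂μ, x ∈ Ωr → ω₀ x < ωt x) (heq : ∀ᵐ x ∂μ, x ∉ Ωr → ωt x = ω₀ x)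
    {Errw : ℝ → ℝ} {cstar ctilde : ℝ} (hmono : MonotoneOn Errw (Set.Ici ctilde))
    (hderiv : HasDerivWithinAt Errw (∫ x, ωt x * g x ∂μ) (Set.Ici cstar) cstar) :
    cstar < ctilde := by
  have hderiv_neg : ∫ x, ωt x * g x ∂μ < 0 :=
    (integral_mul_lt_integral_mul_of_lt_of_neg hω₀g hωtg hΩr hneg hgt heq).trans_le hopt
  exact lt_of_monotoneOn_Ici_of_hasDerivWithinAt_neg hmono hderiv hderiv_neg

/-- Paper's Corollary 1: increasing the weights on a region `Ωr` of samples with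
LDC > 1 (per-sample derivative `g` negative there), keeping weights elsewhere unchanged,
makes the new optimal model complexity `ctilde` strictly larger than `cstar`. -/
theorem cor1_increasing_hard_weights
    {Ω : Type*} [MeasurableSpace Ω] (μ : Measure Ω)
    (g : Ω → ℝ)
    (ω₀ : Ω → ℝ) (hω₀nn : ∀ x, 0 ≤ ω₀ x) (hω₀meas : Measurable ω₀)
    (hω₀g : Integrable (fun x => ω₀ x * g x) μ)
    (hopt : ∫ x, ω₀ x * g x ∂μ = 0)
    (Ωr : Set Ω) (hΩr : MeasurableSet Ωr) (hΩrpos : 0 < μ Ωr)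
    (hneg : ∀ x ∈ Ωr, g x < 0)
    (ωt : Ω → ℝ) (hωtnn : ∀ x, 0 ≤ ωt x) (hωtmeas : Measurable ωt)
    (hωtg : Integrable (fun x => ωt x * g x) μ)
    (hgt : ∀ x ∈ Ωr, ω₀ x < ωt x)
    (heq : ∀ x ∉ Ωr, ωt x = ω₀ x)
    (Errw : ℝ → ℝ) (cstar ctilde : ℝ)
    (hdiff : Differentiable ℝ Errw)
    (hanti : StrictAntiOn Errw (Set.Iic ctilde))
    (hmono : StrictMonoOn Errw (Set.Ici ctilde))
    (hderiv : deriv Errw cstar = ∫ x, ωt x * g x ∂μ) :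
    ctilde > cstar := by
  have hderivAt : HasDerivAt Errw (∫ x, ωt x * g x ∂μ) cstar :=
    hderiv ▸ (hdiff cstar).hasDerivAt
  exact cor1_increasing_hard_weights_general hω₀g hopt.le hΩrpos.ne' (.of_forall hneg) hωtg
    (.of_forall hgt) (.of_forall heq) hmono.monotoneOn hderivAt.hasDerivWithinAt
end

section
/- Let (Ω, μ) be a measure space and g : Ω → ℝ integrable with ∫_Ω g dμ = 0. Let Ω^r ⊆ Ω be measurable with μ(Ω^r) > 0 and g(x) > 0 for every x ∈ Ω^r. Fix ω > 1 and set w(x) = ω for x ∈ Ω^r and w(x) = 1 otherwise; then ∫_Ω w(x)·g(x) dμ(x) = (ω − 1)·∫_{Ω^r} g dμ > 0. Moreover, if the weighted generalization error Err^w : ℝ → ℝ is differentiable, unimodal with minimizer c'^* (strictly decreasing on (-∞, c'^*], strictly increasing on [c'^*, ∞)), and its derivative at c* equals ∫_Ω w(x)·g(x) dμ(x), then c'^* < c*. (Paper's Proposition 4: placing a constant weight ω > 1 on a region of easy samples, each with LDC < 1, while keeping weight 1 elsewhere, makes the new optimal model complexity strictly smaller.) -/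
open MeasureTheory

section WeightedIntegral

variable {Ω : Type*} [MeasurableSpace Ω] {μ : Measure Ω}

theorem integral_smul_eq_add_sub_one_smul_setIntegral
    {𝕜 E : Type*} [NormedField 𝕜] [NormedAddCommGroup E] [NormedSpace ℝ E] [NormedSpace 𝕜 E]
    [SMulCommClass ℝ 𝕜 E] {g : Ω → E} {w : Ω → 𝕜} {s : Set Ω} {c : 𝕜}
    (hg : Integrable g μ) (hs : NullMeasurableSet s μ)
    (hw_mem : ∀ᵐ x ∂μ, x ∈ s → w x = c) (hw_notMem : ∀ᵐ x ∂μ, x ∉ s → w x = 1) :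
    ∫ x, w x • g x ∂μ = ∫ x, g x ∂μ + (c - 1) • ∫ x in s, g x ∂μ := by
  have w_smul_g : ∀ᵐ x ∂μ, w x • g x = g x + (c - 1) • s.indicator g x := by
    filter_upwards [hw_mem, hw_notMem] with x hx_mem hx_notMem
    by_cases hx : x ∈ s
    · rw [hx_mem hx, Set.indicator_of_mem hx, sub_smul, one_smul, add_sub_cancel]
    · rw [hx_notMem hx, Set.indicator_of_notMem hx, smul_zero, add_zero, one_smul]
  calc ∫ x, w x • g x ∂μ
      = ∫ x, g x + (c - 1) • s.indicator g x ∂μ := integral_congr_ae w_smul_g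
    _ = ∫ x, g x ∂μ + (c - 1) • ∫ x, s.indicator g x ∂μ := by
      rw [integral_add hg ((hg.indicator₀ hs).fun_smul (c - 1)), integral_smul]
    _ = ∫ x, g x ∂μ + (c - 1) • ∫ x in s, g x ∂μ := by rw [integral_indicator₀ hs]

theorem integral_pos_of_ae_pos {g : Ω → ℝ} (hμ : μ ≠ 0) (hg : Integrable g μ)
    (hpos : ∀ᵐ x ∂μ, 0 < g x) : 0 < ∫ x, g x ∂μ := by
  have support_ae_univ : Function.support g =ᵐ[μ] Set.univ :=
    Filter.eventuallyEq_univ.mpr (hpos.mono fun _ hx => hx.ne')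
  rw [integral_pos_iff_support_of_nonneg_ae (hpos.mono fun _ hx => hx.le) hg,
    measure_congr support_ae_univ]
  exact Measure.measure_univ_pos.mpr hμ

end WeightedIntegral

theorem lt_of_antitoneOn_Iic_of_hasDerivWithinAt_pos {f : ℝ → ℝ} {f' a b : ℝ}
    (hf : AntitoneOn f (Set.Iic a)) (hderiv : HasDerivWithinAt f f' (Set.Iic b) b)
    (hf' : 0 < f') : a < b := by
  by_contra! hba
  have f'_nonpos : f' ≤ 0 :=
    hderiv.nonpos_of_antitoneOn (uniqueDiffOn_Iic b b Set.self_mem_Iic).accPt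
      (hf.mono (Set.Iic_subset_Iic.mpr hba))
  exact f'_nonpos.not_gt hf'

theorem prop4_easy_weighting_decreases_complexity_general
    {Ω : Type*} [MeasurableSpace Ω] {μ : Measure Ω}
    {g : Ω → ℝ} (hg : Integrable g μ) (hg0 : ∫ x, g x ∂μ = 0)
    {Ωr : Set Ω} (hΩr : NullMeasurableSet Ωr μ) (hΩrpos : 0 < μ Ωr)
    (hpos : ∀ᵐ x ∂μ.restrict Ωr, 0 < g x)
    {ω : ℝ} (hω : 1 < ω)
    {w : Ω → ℝ} (hwin : ∀ᵐ x ∂μ, x ∈ Ωr → w x = ω) (hwout : ∀ᵐ x ∂μ, x ∉ Ωr → w x = 1)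
    (cstar : ℝ) :
    (∫ x, w x * g x ∂μ = (ω - 1) * ∫ x in Ωr, g x ∂μ ∧
        0 < ∫ x, w x * g x ∂μ) ∧
      (∀ (Errw : ℝ → ℝ) (c' : ℝ), AntitoneOn Errw (Set.Iic c') →
        HasDerivWithinAt Errw (∫ x, w x * g x ∂μ) (Set.Iic cstar) cstar → c' < cstar) := by
  have weighted_eq : ∫ x, w x * g x ∂μ = (ω - 1) * ∫ x in Ωr, g x ∂μ := by
    simpa only [smul_eq_mul, hg0, zero_add] using
      integral_smul_eq_add_sub_one_smul_setIntegral hg hΩr hwin hwout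
  have region_pos : 0 < ∫ x in Ωr, g x ∂μ :=
    integral_pos_of_ae_pos (Measure.restrict_eq_zero.not.mpr hΩrpos.ne') hg.restrict hpos
  have weighted_pos : 0 < ∫ x, w x * g x ∂μ :=
    weighted_eq ▸ mul_pos (sub_pos.mpr hω) region_pos
  exact ⟨⟨weighted_eq, weighted_pos⟩, fun _ _ hanti hderiv =>
    lt_of_antitoneOn_Iic_of_hasDerivWithinAt_pos hanti hderiv weighted_pos⟩

/-- Paper's Proposition 4: placing a constant weight `ω > 1` on a region `Ωr` of easy
samples (per-sample derivative `g` positive there, i.e. LDC < 1), keeping weight `1`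
elsewhere, gives `∫ w·g = (ω - 1) ∫_{Ωr} g > 0`, and consequently the new optimal model
complexity is strictly smaller than `cstar`. -/
theorem prop4_easy_weighting_decreases_complexity
    {Ω : Type*} [MeasurableSpace Ω] (μ : Measure Ω)
    (g : Ω → ℝ) (hg : Integrable g μ) (hg0 : ∫ x, g x ∂μ = 0)
    (Ωr : Set Ω) (hΩr : MeasurableSet Ωr) (hΩrpos : 0 < μ Ωr)
    (hpos : ∀ x ∈ Ωr, 0 < g x)
    (ω : ℝ) (hω : 1 < ω)
    (w : Ω → ℝ) (hwin : ∀ x ∈ Ωr, w x = ω) (hwout : ∀ x ∉ Ωr, w x = 1)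
    (cstar : ℝ) :
    (∫ x, w x * g x ∂μ = (ω - 1) * ∫ x in Ωr, g x ∂μ ∧
        0 < ∫ x, w x * g x ∂μ) ∧
      (∀ (Errw : ℝ → ℝ) (c' : ℝ), Differentiable ℝ Errw →
        StrictAntiOn Errw (Set.Iic c') → StrictMonoOn Errw (Set.Ici c') →
        deriv Errw cstar = ∫ x, w x * g x ∂μ → c' < cstar) := by
  have ⟨weighted, decreases⟩ := prop4_easy_weighting_decreases_complexity_general hg hg0
    hΩr.nullMeasurableSet hΩrpos (ae_restrict_of_forall_mem hΩr hpos) hω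
    (.of_forall hwin) (.of_forall hwout) cstar
  exact ⟨weighted, fun Errw c' hdiff hanti _ hderiv =>
    decreases Errw c' hanti.antitoneOn (hderiv ▸ (hdiff cstar).hasDerivAt.hasDerivWithinAt)⟩
end

section
/- Let (Ω, μ) be a measure space, ld : Ω → ℝ a measurable learning-difficulty function, c* ∈ ℝ, and g : Ω → ℝ integrable with ∫_Ω g dμ = 0, satisfying the sign condition: g(x) > 0 whenever ld(x) < c*, g(x) < 0 whenever ld(x) > c*, and g(x) = 0 whenever ld(x) = c*. Let u : ℝ → ℝ be nonnegative and monotone nonincreasing, set w = u ∘ ld, and assume w·g is integrable and μ({x : g(x) ≠ 0 and w(x) ≠ u(c*)}) > 0. Then ∫_Ω w(x)·g(x) dμ(x) > 0; consequently, if the weighted generalization error Err^w : ℝ → ℝ is differentiable, unimodal with minimizer c'^* (strictly decreasing on (-∞, c'^*], strictly increasing on [c'^*, ∞)), and its derivative at c* equals ∫_Ω w(x)·g(x) dμ(x), then c'^* < c*. (Paper's Proposition 6: weighting samples by a nonincreasing, non-constant function of their learning difficulty makes the new optimal model complexity strictly smaller than the original optimal complexity c*.) -/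
open MeasureTheory

/-!
Since `g` integrates to zero, a constant may be subtracted from the weight without changing
`∫ w * g`. Subtracting the value of the weight at the threshold difficulty makes the integrand
nonnegative: the two factors `u (ld x) - u cstar` and `g x` change sign together. A positive slope
at `cstar` in turn rules out that the weighted error is still nonincreasing up to `cstar`.
-/

theorem sub_mul_nonneg_of_antitone {D R : Type*} [LinearOrder D] [Ring R] [PartialOrder R]
    [IsOrderedRing R] {u : D → R} (hu : Antitone u) {d t : D} {y : R}
    (hlt : t < d → 0 ≤ y) (hgt : d < t → y ≤ 0) : 0 ≤ (u t - u d) * y := by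
  rcases lt_trichotomy t d with h | rfl | h
  · exact mul_nonneg (sub_nonneg.2 (hu h.le)) (hlt h)
  · rw [sub_self, zero_mul]
  · exact mul_nonneg_of_nonpos_of_nonpos (sub_nonpos.2 (hu h.le)) (hgt h)

section WeightedIntegral

variable {Ω : Type*} [MeasurableSpace Ω] {μ : Measure Ω}

theorem integral_sub_const_mul_eq {𝕜 : Type*} [RCLike 𝕜] {w g : Ω → 𝕜}
    (hg : Integrable g μ) (hg0 : ∫ x, g x ∂μ = 0)
    (hwg : Integrable (fun x => w x * g x) μ) (a : 𝕜) :
    ∫ x, (w x - a) * g x ∂μ = ∫ x, w x * g x ∂μ := by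
  simp only [sub_mul]
  rw [integral_sub hwg (hg.const_mul a), integral_const_mul, hg0, mul_zero, sub_zero]

variable {w g : Ω → ℝ}

theorem integral_mul_pos_of_sub_const_mul_nonneg (hg : Integrable g μ) (hg0 : ∫ x, g x ∂μ = 0)
    (hwg : Integrable (fun x => w x * g x) μ) {a : ℝ}
    (hnonneg : ∀ᵐ x ∂μ, 0 ≤ (w x - a) * g x) (hne : 0 < μ {x | g x ≠ 0 ∧ w x ≠ a}) :
    0 < ∫ x, w x * g x ∂μ := by
  have hint : Integrable (fun x => (w x - a) * g x) μ := by
    simp only [sub_mul]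
    exact hwg.sub (hg.const_mul a)
  have hsupport : {x | g x ≠ 0 ∧ w x ≠ a} ⊆ Function.support fun x => (w x - a) * g x :=
    fun _ ⟨hgx, hwx⟩ => mul_ne_zero (sub_ne_zero.2 hwx) hgx
  rw [← integral_sub_const_mul_eq hg hg0 hwg a,
    integral_pos_iff_support_of_nonneg_ae hnonneg hint]
  exact hne.trans_le (measure_mono hsupport)

theorem integral_antitone_comp_mul_pos {D : Type*} [LinearOrder D] {ld : Ω → D} {d : D}
    {u : D → ℝ} (hu : Antitone u) (hg : Integrable g μ) (hg0 : ∫ x, g x ∂μ = 0)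
    (hlt : ∀ᵐ x ∂μ, ld x < d → 0 ≤ g x) (hgt : ∀ᵐ x ∂μ, d < ld x → g x ≤ 0)
    (hwg : Integrable (fun x => u (ld x) * g x) μ)
    (hne : 0 < μ {x | g x ≠ 0 ∧ u (ld x) ≠ u d}) :
    0 < ∫ x, u (ld x) * g x ∂μ := by
  refine integral_mul_pos_of_sub_const_mul_nonneg hg hg0 hwg ?_ hne
  filter_upwards [hlt, hgt] with x hltx hgtx
  exact sub_mul_nonneg_of_antitone hu hltx hgtx

end WeightedIntegral

theorem lt_of_hasDerivAt_pos_of_antitoneOn_Iic {f : ℝ → ℝ} {f' m c : ℝ}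
    (hf : AntitoneOn f (Set.Iic m)) (hderiv : HasDerivAt f f' c) (hpos : 0 < f') : m < c := by
  by_contra! hcm
  have hanti : AntitoneOn f (Set.Iic c) := hf.mono (Set.Iic_subset_Iic.2 hcm)
  exact hpos.not_ge (hderiv.hasDerivWithinAt.nonpos_of_antitoneOn
    (uniqueDiffWithinAt_Iic c).accPt hanti)

theorem prop6_nonincreasing_weighting_general
    {Ω : Type*} [MeasurableSpace Ω] {μ : Measure Ω} {ld : Ω → ℝ} {cstar : ℝ} {g : Ω → ℝ}
    (hg : Integrable g μ) (hg0 : ∫ x, g x ∂μ = 0)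
    (heasy : ∀ᵐ x ∂μ, ld x < cstar → 0 ≤ g x) (hhard : ∀ᵐ x ∂μ, cstar < ld x → g x ≤ 0)
    {u : ℝ → ℝ} (hu : Antitone u) (hwg : Integrable (fun x => u (ld x) * g x) μ)
    (hne : 0 < μ {x | g x ≠ 0 ∧ u (ld x) ≠ u cstar}) :
    0 < ∫ x, u (ld x) * g x ∂μ ∧
      ∀ (Errw : ℝ → ℝ) (c' : ℝ), AntitoneOn Errw (Set.Iic c') →
        HasDerivAt Errw (∫ x, u (ld x) * g x ∂μ) cstar → c' < cstar := by
  have hpos := integral_antitone_comp_mul_pos hu hg hg0 heasy hhard hwg hne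
  exact ⟨hpos, fun _ _ hanti hderiv => lt_of_hasDerivAt_pos_of_antitoneOn_Iic hanti hderiv hpos⟩

/-- Paper's Proposition 6: weighting samples by a nonnegative nonincreasing, non-constant
(in the stated sense) function `u` of their learning difficulty `ld` makes the derivative
of the weighted generalization error at `cstar` strictly positive, hence the new optimal
model complexity strictly smaller than `cstar`. -/
theorem prop6_nonincreasing_weighting
    {Ω : Type*} [MeasurableSpace Ω] (μ : Measure Ω)
    (ld : Ω → ℝ) (hld : Measurable ld) (cstar : ℝ)
    (g : Ω → ℝ) (hg : Integrable g μ) (hg0 : ∫ x, g x ∂μ = 0)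
    (hpos : ∀ x, ld x < cstar → 0 < g x)
    (hneg : ∀ x, cstar < ld x → g x < 0)
    (hzero : ∀ x, ld x = cstar → g x = 0)
    (u : ℝ → ℝ) (hunn : ∀ t, 0 ≤ u t) (huanti : Antitone u)
    (w : Ω → ℝ) (hw : ∀ x, w x = u (ld x))
    (hwg : Integrable (fun x => w x * g x) μ)
    (hnd : 0 < μ {x | g x ≠ 0 ∧ w x ≠ u cstar}) :
    0 < ∫ x, w x * g x ∂μ ∧
      (∀ (Errw : ℝ → ℝ) (c' : ℝ), Differentiable ℝ Errw →
        StrictAntiOn Errw (Set.Iic c') → StrictMonoOn Errw (Set.Ici c') →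
        deriv Errw cstar = ∫ x, w x * g x ∂μ → c' < cstar) := by
  obtain rfl : w = fun x => u (ld x) := funext hw
  have ⟨hI, hlt⟩ := prop6_nonincreasing_weighting_general hg hg0
    (ae_of_all μ fun x hx => (hpos x hx).le) (ae_of_all μ fun x hx => (hneg x hx).le) huanti hwg hnd
  exact ⟨hI, fun Errw c' hd ha _ hder => hlt Errw c' ha.antitoneOn (hder ▸ (hd cstar).hasDerivAt)⟩
end
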